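/- Let L, N be a lightlike frame along the unit-speed spacelike curve γ̂ with α_L nowhere zero on I. Then the derivative of the singular value curve u ↦ γ̂(u) + L(u)/α_L(u) of the osculating lightlike surface equals −(σ_L(u)/α_L(u)²) L(u); consequently this curve is constant (equal to a single point V_L) if and only if σ_L ≡ 0 on I, and in that case ⟨γ̂(u) − V_L, γ̂(u) − V_L⟩ = 0 for all u, i.e. γ̂ lies on the lightcone with vertex V_L. The analogous statements hold for u ↦ γ̂(u) + N(u)/α_N(u) with σ_N in place of σ_L when α_N is nowhere zero. -/

import Mathlib

open scoped Topology

noncomputable section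

/-- Points/vectors of Lorentz–Minkowski 3-space `ℝ³₁`. -/
abbrev R3 : Type := Fin 3 → ℝ

/-- The Lorentz–Minkowski scalar product `⟨x,y⟩ = -x₀y₀ + x₁y₁ + x₂y₂`. -/
def mink (x y : R3) : ℝ := -(x 0 * y 0) + x 1 * y 1 + x 2 * y 2

/-- `(L, N)` is a lightlike frame along the unit-speed spacelike curve `γ` on `I`:
`γ, L, N` are smooth on `I`, `⟨e,e⟩ = 1` (with `e = γ'`), `⟨e,L⟩ = ⟨e,N⟩ = 0`,
`⟨L,L⟩ = ⟨N,N⟩ = 0` and `⟨L,N⟩ = 1` on `I`. -/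
structure LightlikeFrame (I : Set ℝ) (γ L N : ℝ → R3) : Prop where
  smooth_gamma : ContDiffOn ℝ (⊤ : ℕ∞) γ I
  smooth_L : ContDiffOn ℝ (⊤ : ℕ∞) L I
  smooth_N : ContDiffOn ℝ (⊤ : ℕ∞) N I
  unit_speed : ∀ u ∈ I, mink (deriv γ u) (deriv γ u) = 1
  eL : ∀ u ∈ I, mink (deriv γ u) (L u) = 0
  eN : ∀ u ∈ I, mink (deriv γ u) (N u) = 0
  LL : ∀ u ∈ I, mink (L u) (L u) = 0
  NN : ∀ u ∈ I, mink (N u) (N u) = 0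
  LN : ∀ u ∈ I, mink (L u) (N u) = 1

/-- `α_L = ⟨γ'', L⟩`. -/
def alphaL (γ L : ℝ → R3) (u : ℝ) : ℝ := mink (deriv (deriv γ) u) (L u)

/-- `α_N = ⟨γ'', N⟩`. -/
def alphaN (γ N : ℝ → R3) (u : ℝ) : ℝ := mink (deriv (deriv γ) u) (N u)

/-- `α_G = ⟨L, N'⟩`. -/
def alphaG (L N : ℝ → R3) (u : ℝ) : ℝ := mink (L u) (deriv N u)

/-- `σ_L = α_L' + α_L α_G`. -/
def sigmaL (γ L N : ℝ → R3) (u : ℝ) : ℝ :=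
  deriv (alphaL γ L) u + alphaL γ L u * alphaG L N u

/-- `σ_N = α_N' - α_N α_G`. -/
def sigmaN (γ L N : ℝ → R3) (u : ℝ) : ℝ :=
  deriv (alphaN γ N) u - alphaN γ N u * alphaG L N u

theorem mink_comm (x y : R3) : mink x y = mink y x := by
  unfold mink
  ring

theorem mink_add_left (x y z : R3) : mink (x + y) z = mink x z + mink y z := by
  simp only [mink, Pi.add_apply]
  ring

theorem mink_smul_left (c : ℝ) (x y : R3) : mink (c • x) y = c * mink x y := by
  simp only [mink, Pi.smul_apply, smul_eq_mul]
  ring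

theorem mink_smul_right (c : ℝ) (x y : R3) : mink x (c • y) = c * mink x y := by
  rw [mink_comm, mink_smul_left, mink_comm]

theorem HasDerivAt.mink {f g : ℝ → R3} {f' g' : R3} {u : ℝ}
    (hf : HasDerivAt f f' u) (hg : HasDerivAt g g' u) :
    HasDerivAt (fun t => mink (f t) (g t)) (mink f' (g u) + mink (f u) g') u := by
  rw [hasDerivAt_pi] at hf hg
  refine ((((hf 0).mul (hg 0)).neg.add ((hf 1).mul (hg 1))).add
    ((hf 2).mul (hg 2))).congr_deriv ?_
  simp only [_root_.mink]
  ring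

/-- A vector orthogonal to a pseudo-orthonormal basis `e, l, n` vanishes. -/
theorem eq_zero_of_mink_eq_zero {e l n x : R3} (hee : mink e e = 1) (hel : mink e l = 0)
    (hen : mink e n = 0) (hll : mink l l = 0) (hnn : mink n n = 0) (hln : mink l n = 1)
    (hxe : mink x e = 0) (hxl : mink x l = 0) (hxn : mink x n = 0) : x = 0 := by
  set d : ℝ := e 0 * (l 1 * n 2 - l 2 * n 1) - e 1 * (l 0 * n 2 - l 2 * n 0)
    + e 2 * (l 0 * n 1 - l 1 * n 0) with hd
  have gram : d ^ 2 = -(mink e e * (mink l l * mink n n - mink l n * mink l n)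
      - mink e l * (mink e l * mink n n - mink l n * mink e n)
      + mink e n * (mink e l * mink l n - mink l l * mink e n)) := by
    simp only [hd, mink]
    ring
  have hd0 : d ≠ 0 := by
    rw [hee, hel, hen, hll, hnn, hln] at gram
    rintro h
    norm_num [h] at gram
  simp only [mink] at hxe hxl hxn
  ext i
  apply (mul_eq_zero.mp _).resolve_left hd0
  fin_cases i
  · simp only [hd, Fin.zero_eta]
    linear_combination -(l 1 * n 2 - l 2 * n 1) * hxe + (e 1 * n 2 - e 2 * n 1) * hxl
      - (e 1 * l 2 - e 2 * l 1) * hxn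
  · simp only [hd, Fin.mk_one]
    linear_combination -(l 0 * n 2 - l 2 * n 0) * hxe + (e 0 * n 2 - e 2 * n 0) * hxl
      - (e 0 * l 2 - e 2 * l 0) * hxn
  · simp only [hd, Fin.reduceFinMk]
    linear_combination (l 0 * n 1 - l 1 * n 0) * hxe - (e 0 * n 1 - e 1 * n 0) * hxl
      + (e 0 * l 1 - e 1 * l 0) * hxn

namespace LightlikeFrame

variable {I : Set ℝ} {γ L N : ℝ → R3}

theorem swap (h : LightlikeFrame I γ L N) : LightlikeFrame I γ N L where
  smooth_gamma := h.smooth_gamma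
  smooth_L := h.smooth_N
  smooth_N := h.smooth_L
  unit_speed := h.unit_speed
  eL := h.eN
  eN := h.eL
  LL := h.NN
  NN := h.LL
  LN u hu := by rw [mink_comm, h.LN u hu]

theorem L_ne_zero (h : LightlikeFrame I γ L N) {u : ℝ} (hu : u ∈ I) : L u ≠ 0 := by
  intro h0
  simpa [h0, mink] using h.LN u hu

variable {u : ℝ}

theorem hasDerivAt_gamma (h : LightlikeFrame I γ L N) (hI : IsOpen I) (hu : u ∈ I) :
    HasDerivAt γ (deriv γ u) u :=
  ((h.smooth_gamma.differentiableOn (by simp)).differentiableAt (hI.mem_nhds hu)).hasDerivAt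

theorem hasDerivAt_L (h : LightlikeFrame I γ L N) (hI : IsOpen I) (hu : u ∈ I) :
    HasDerivAt L (deriv L u) u :=
  ((h.smooth_L.differentiableOn (by simp)).differentiableAt (hI.mem_nhds hu)).hasDerivAt

theorem contDiffOn_deriv_gamma (h : LightlikeFrame I γ L N) (hI : IsOpen I) :
    ContDiffOn ℝ (⊤ : ℕ∞) (deriv γ) I :=
  h.smooth_gamma.deriv_of_isOpen hI (by simp)

theorem hasDerivAt_deriv_gamma (h : LightlikeFrame I γ L N) (hI : IsOpen I) (hu : u ∈ I) :
    HasDerivAt (deriv γ) (deriv (deriv γ) u) u :=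
  (((h.contDiffOn_deriv_gamma hI).differentiableOn (by simp)).differentiableAt
    (hI.mem_nhds hu)).hasDerivAt

theorem hasDerivAt_alphaL (h : LightlikeFrame I γ L N) (hI : IsOpen I) (hu : u ∈ I) :
    HasDerivAt (alphaL γ L) (deriv (alphaL γ L) u) u := by
  have h2 : ContDiffOn ℝ (⊤ : ℕ∞) (deriv (deriv γ)) I :=
    (h.contDiffOn_deriv_gamma hI).deriv_of_isOpen hI (by simp)
  have h3 := ((h2.differentiableOn (by simp)).differentiableAt (hI.mem_nhds hu)).hasDerivAt
  exact (h3.mink (h.hasDerivAt_L hI hu)).differentiableAt.hasDerivAt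

/-- Differentiating a scalar product that is constant along the curve. -/
theorem _root_.mink_deriv_add_eq_zero {f g : ℝ → R3} {f' g' : R3} {c : ℝ} (hI : IsOpen I)
    (hu : u ∈ I) (hf : HasDerivAt f f' u) (hg : HasDerivAt g g' u)
    (hc : ∀ t ∈ I, mink (f t) (g t) = c) : mink f' (g u) + mink (f u) g' = 0 := by
  refine (hf.mink hg).unique ((hasDerivAt_const u c).congr_of_eventuallyEq ?_)
  filter_upwards [hI.mem_nhds hu] with t ht using hc t ht

theorem mink_deriv_L_N (h : LightlikeFrame I γ L N) (hI : IsOpen I) (hu : u ∈ I) :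
    mink (deriv L u) (N u) = -alphaG L N u :=
  eq_neg_of_add_eq_zero_left <|
    mink_deriv_add_eq_zero hI hu (h.hasDerivAt_L hI hu) (h.swap.hasDerivAt_L hI hu) h.LN

theorem alphaG_swap (h : LightlikeFrame I γ L N) (hI : IsOpen I) (hu : u ∈ I) :
    alphaG N L u = -alphaG L N u := by
  rw [← h.mink_deriv_L_N hI hu, mink_comm, alphaG]

theorem sigmaN_eq (h : LightlikeFrame I γ L N) (hI : IsOpen I) (hu : u ∈ I) :
    sigmaN γ L N u = sigmaL γ N L u := by
  rw [sigmaL, h.alphaG_swap hI hu, mul_neg, ← sub_eq_add_neg]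
  rfl

/-- The structure equation `L' = -α_L e - α_G L`. -/
theorem deriv_L (h : LightlikeFrame I γ L N) (hI : IsOpen I) (hu : u ∈ I) :
    deriv L u = -(alphaL γ L u • deriv γ u + alphaG L N u • L u) := by
  have dL := h.hasDerivAt_L hI hu
  have hLe : mink (deriv L u) (deriv γ u) = -alphaL γ L u := by
    rw [mink_comm]
    exact eq_neg_of_add_eq_zero_right <|
      mink_deriv_add_eq_zero hI hu (h.hasDerivAt_deriv_gamma hI hu) dL h.eL
  have hLL : mink (deriv L u) (L u) = 0 := by
    have := mink_deriv_add_eq_zero hI hu dL dL h.LL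
    rw [mink_comm (L u)] at this
    linarith
  have hLN := h.mink_deriv_L_N hI hu
  have heL := h.eL u hu
  rw [← add_eq_zero_iff_eq_neg]
  refine eq_zero_of_mink_eq_zero (h.unit_speed u hu) heL (h.eN u hu) (h.LL u hu) (h.NN u hu)
    (h.LN u hu) ?_ ?_ ?_ <;> simp only [mink_add_left, mink_smul_left]
  · rw [hLe, h.unit_speed u hu, mink_comm (L u), heL]
    ring
  · rw [hLL, heL, h.LL u hu]
    ring
  · rw [hLN, h.eN u hu, h.LN u hu]
    ring

theorem hasDerivAt_singularValueCurve (h : LightlikeFrame I γ L N) (hI : IsOpen I) (hu : u ∈ I)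
    (hα : alphaL γ L u ≠ 0) :
    HasDerivAt (fun u => γ u + (alphaL γ L u)⁻¹ • L u)
      ((-(sigmaL γ L N u / (alphaL γ L u) ^ 2)) • L u) u := by
  refine ((h.hasDerivAt_gamma hI hu).add (((h.hasDerivAt_alphaL hI hu).inv hα).smul
    (h.hasDerivAt_L hI hu))).congr_deriv ?_
  rw [h.deriv_L hI hu]
  ext i
  simp only [sigmaL, Pi.add_apply, Pi.smul_apply, Pi.neg_apply, Pi.inv_apply, smul_eq_mul]
  field_simp
  ring

theorem singularValueCurve_const_iff (h : LightlikeFrame I γ L N) (hI : IsOpen I)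
    (hconn : IsPreconnected I) (hα : ∀ u ∈ I, alphaL γ L u ≠ 0) :
    (∃ V : R3, ∀ u ∈ I, γ u + (alphaL γ L u)⁻¹ • L u = V) ↔ ∀ u ∈ I, sigmaL γ L N u = 0 := by
  have hderiv := fun u hu => h.hasDerivAt_singularValueCurve (u := u) hI hu (hα u hu)
  constructor
  · rintro ⟨V, hV⟩ u hu
    have h0 := (hderiv u hu).unique ((hasDerivAt_const u V).congr_of_eventuallyEq
      (by filter_upwards [hI.mem_nhds hu] with t ht using hV t ht))
    simpa [h.L_ne_zero hu, hα u hu] using h0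
  · intro hσ
    refine hI.exists_is_const_of_deriv_eq_zero hconn
      (fun u hu => (hderiv u hu).differentiableAt.differentiableWithinAt) fun u hu => ?_
    simp [(hderiv u hu).deriv, hσ u hu]

theorem mink_sub_singularValue (h : LightlikeFrame I γ L N) (hu : u ∈ I) {V : R3}
    (hV : γ u + (alphaL γ L u)⁻¹ • L u = V) : mink (γ u - V) (γ u - V) = 0 := by
  have : γ u - V = (-(alphaL γ L u)⁻¹) • L u := by
    rw [← hV, neg_smul]
    abel
  rw [this, mink_smul_left, mink_smul_right, h.LL u hu, mul_zero, mul_zero]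

end LightlikeFrame

/-- If `α_L` is nowhere zero on `I`, the singular value curve
`u ↦ γ̂(u) + L(u)/α_L(u)` of the osculating lightlike surface has derivative
`-(σ_L/α_L²) L`; it is constant (equal to a point `V_L`) iff `σ_L ≡ 0` on `I`,
in which case `⟨γ̂(u) - V_L, γ̂(u) - V_L⟩ = 0` for all `u ∈ I`, i.e. `γ̂` lies on the
lightcone with vertex `V_L`. Analogously for `u ↦ γ̂(u) + N(u)/α_N(u)` and `σ_N`. -/
theorem singular_value_curve_and_lightcone (a b : ℝ) (γ L N : ℝ → R3)
    (hframe : LightlikeFrame (Set.Ioo a b) γ L N) :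
    (( ∀ u ∈ Set.Ioo a b, alphaL γ L u ≠ 0) →
      (∀ u ∈ Set.Ioo a b,
        deriv (fun u => γ u + (alphaL γ L u)⁻¹ • L u) u =
          (-(sigmaL γ L N u / (alphaL γ L u) ^ 2)) • L u) ∧
      ((∃ V : R3, ∀ u ∈ Set.Ioo a b, γ u + (alphaL γ L u)⁻¹ • L u = V) ↔
        ∀ u ∈ Set.Ioo a b, sigmaL γ L N u = 0) ∧
      (∀ V : R3, (∀ u ∈ Set.Ioo a b, γ u + (alphaL γ L u)⁻¹ • L u = V) →
        ∀ u ∈ Set.Ioo a b, mink (γ u - V) (γ u - V) = 0)) ∧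
    (( ∀ u ∈ Set.Ioo a b, alphaN γ N u ≠ 0) →
      (∀ u ∈ Set.Ioo a b,
        deriv (fun u => γ u + (alphaN γ N u)⁻¹ • N u) u =
          (-(sigmaN γ L N u / (alphaN γ N u) ^ 2)) • N u) ∧
      ((∃ V : R3, ∀ u ∈ Set.Ioo a b, γ u + (alphaN γ N u)⁻¹ • N u = V) ↔
        ∀ u ∈ Set.Ioo a b, sigmaN γ L N u = 0) ∧
      (∀ V : R3, (∀ u ∈ Set.Ioo a b, γ u + (alphaN γ N u)⁻¹ • N u = V) →
        ∀ u ∈ Set.Ioo a b, mink (γ u - V) (γ u - V) = 0)) := by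
  have singular : ∀ {L N : ℝ → R3}, LightlikeFrame (Set.Ioo a b) γ L N →
      (∀ u ∈ Set.Ioo a b, alphaL γ L u ≠ 0) →
      (∀ u ∈ Set.Ioo a b,
        deriv (fun u => γ u + (alphaL γ L u)⁻¹ • L u) u =
          (-(sigmaL γ L N u / (alphaL γ L u) ^ 2)) • L u) ∧
      ((∃ V : R3, ∀ u ∈ Set.Ioo a b, γ u + (alphaL γ L u)⁻¹ • L u = V) ↔
        ∀ u ∈ Set.Ioo a b, sigmaL γ L N u = 0) ∧
      (∀ V : R3, (∀ u ∈ Set.Ioo a b, γ u + (alphaL γ L u)⁻¹ • L u = V) →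
        ∀ u ∈ Set.Ioo a b, mink (γ u - V) (γ u - V) = 0) := fun h hα =>
    ⟨fun u hu => (h.hasDerivAt_singularValueCurve isOpen_Ioo hu (hα u hu)).deriv,
      h.singularValueCurve_const_iff isOpen_Ioo isPreconnected_Ioo hα,
      fun _ hV u hu => h.mink_sub_singularValue hu (hV u hu)⟩
  refine ⟨singular hframe, fun hα => ?_⟩
  obtain ⟨hderiv, hconst, hcone⟩ := singular hframe.swap hα
  have hσ := fun u hu => hframe.sigmaN_eq (u := u) isOpen_Ioo hu
  refine ⟨fun u hu => ?_, hconst.trans (forall₂_congr fun u hu => ?_), hcone⟩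
  · rw [hσ u hu]
    exact hderiv u hu
  · rw [hσ u hu]
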